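/- Every Gurarii space is a Lindenstrauss space: if a Banach space K is approximately saturated with respect to isometries between finite-dimensional spaces, then K is approximately injective with respect to isometries between finite-dimensional spaces. -/

import Mathlib

/-!
Let `f : A → K` be a contraction and `h : A → B` an isometry. The range `R` of `f` embeds
isometrically in `K`, and `A → R` is still a contraction. In the pushout
`P = (B ⊕₁ R) / {(h a, -f a)}` the canonical map `R → P` is again isometric, because
`‖r‖ ≤ ‖f a‖ + ‖r - f a‖ ≤ ‖h a‖ + ‖r - f a‖` (`exists_isometric_amalgam`). Hence the Gurarii
property extends the inclusion `R → K`, up to `ε`, to an isometry `P → K`; its composite with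
the contraction `B → P` is the required approximate extension of `f`.

Since the Gurarii property only quantifies over spaces in `Type` while `K` lives in an arbitrary
universe, `R` is realised as `A ⧸ ker f` with the norm induced from `K`.
-/

/-- A Banach space `K` is a *Gurarii space* (approximately saturated w.r.t. isometries
between finite-dimensional spaces) if for every linear isometric embedding `h : A → B`
between finite-dimensional Banach spaces, every linear isometric embedding `u : A → K`
and every `ε > 0` there is a linear isometric embedding `g : B → K` with `‖g ∘ h - u‖ ≤ ε`. -/
def IsGurarii (K : Type*) [NormedAddCommGroup K] [NormedSpace ℂ K] : Prop :=
  ∀ (A B : Type) [NormedAddCommGroup A] [NormedSpace ℂ A] [FiniteDimensional ℂ A]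
    [NormedAddCommGroup B] [NormedSpace ℂ B] [FiniteDimensional ℂ B]
    (h : A →L[ℂ] B), (∀ x : A, ‖h x‖ = ‖x‖) →
    ∀ u : A →L[ℂ] K, (∀ x : A, ‖u x‖ = ‖x‖) →
      ∀ ε : ℝ, 0 < ε →
        ∃ g : B →L[ℂ] K, (∀ x : B, ‖g x‖ = ‖x‖) ∧ ‖g.comp h - u‖ ≤ ε

/-- A Banach space `K` is *approximately injective w.r.t. isometries between
finite-dimensional spaces* if for every linear isometric embedding `h : A → B` between
finite-dimensional Banach spaces, every morphism `f : A → K` and every `ε > 0` there is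
a morphism `g : B → K` with `‖g ∘ h - f‖ ≤ ε`. -/
def ApproxInjFinDimIsometries (K : Type*) [NormedAddCommGroup K] [NormedSpace ℂ K] : Prop :=
  ∀ (A B : Type) [NormedAddCommGroup A] [NormedSpace ℂ A] [FiniteDimensional ℂ A]
    [NormedAddCommGroup B] [NormedSpace ℂ B] [FiniteDimensional ℂ B]
    (h : A →L[ℂ] B), (∀ x : A, ‖h x‖ = ‖x‖) →
    ∀ f : A →L[ℂ] K, ‖f‖ ≤ 1 →
      ∀ ε : ℝ, 0 < ε →
        ∃ g : B →L[ℂ] K, ‖g‖ ≤ 1 ∧ ‖g.comp h - f‖ ≤ ε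

/-- Pushout of an isometry along a contraction: `h : A → B` and `q : A → R` can be completed to
a commutative square with `j : R → P` isometric and `i : B → P` contractive. -/
theorem exists_isometric_amalgam {A B R : Type}
    [NormedAddCommGroup A] [NormedSpace ℂ A] [FiniteDimensional ℂ A]
    [NormedAddCommGroup B] [NormedSpace ℂ B] [FiniteDimensional ℂ B]
    [NormedAddCommGroup R] [NormedSpace ℂ R] [FiniteDimensional ℂ R]
    (h : A →L[ℂ] B) (hh : ∀ x, ‖h x‖ = ‖x‖) (q : A →L[ℂ] R) (hq : ∀ x, ‖q x‖ ≤ ‖x‖) :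
    ∃ (P : Type) (_ : NormedAddCommGroup P) (_ : NormedSpace ℂ P) (_ : FiniteDimensional ℂ P)
      (i : B →L[ℂ] P) (j : R →L[ℂ] P), (∀ b, ‖i b‖ ≤ ‖b‖) ∧ (∀ r, ‖j r‖ = ‖r‖) ∧
        ∀ a, i (h a) = j (q a) := by
  let E := WithLp 1 (B × R)
  let e : (B × R) ≃ₗ[ℂ] E := (WithLp.linearEquiv 1 ℂ (B × R)).symm
  have he : ∀ b r, ‖e (b, r)‖ = ‖b‖ + ‖r‖ := fun b r => 
    WithLp.prod_norm_eq_of_L1 (e (b, r))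
  have : FiniteDimensional ℂ E := e.finiteDimensional
  let S : Submodule ℂ E :=
    LinearMap.range (e.toLinearMap ∘ₗ (h.toLinearMap.prod (-q.toLinearMap)))
  have : IsClosed (S : Set E) := S.closed_of_finiteDimensional
  let i : B →ₗ[ℂ] E ⧸ S := S.mkQ ∘ₗ e.toLinearMap ∘ₗ LinearMap.inl ℂ B R
  let j : R →ₗ[ℂ] E ⧸ S := S.mkQ ∘ₗ e.toLinearMap ∘ₗ LinearMap.inr ℂ B R
  have hi : ∀ b, ‖i b‖ ≤ ‖b‖ := fun b =>
    (Submodule.Quotient.norm_mk_le S (e (b, 0))).trans (by simp [he])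
  refine ⟨E ⧸ S, inferInstance, inferInstance, inferInstance, LinearMap.toContinuousLinearMap i,
    LinearMap.toContinuousLinearMap j, hi, fun r => le_antisymm ?_ ?_, fun a => ?_⟩
  · exact (Submodule.Quotient.norm_mk_le S (e (0, r))).trans (by simp [he])
  · refine le_of_forall_pos_le_add fun ε hε => ?_
    obtain ⟨m, hm, hlt⟩ := Submodule.Quotient.norm_mk_lt (S := S) (j r) hε
    have hm' : m - e (0, r) ∈ S := (Submodule.Quotient.eq S).1 hm
    obtain ⟨a, ha⟩ := hm'
    have hma : m = e (h a, r - q a) := by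
      rw [← sub_add_cancel m (e (0, r)), ← ha]
      simp [← map_add, sub_eq_neg_add]
    rw [hma, he, hh] at hlt
    have h1 : ‖r‖ ≤ ‖q a‖ + ‖r - q a‖ := by simpa using norm_add_le (q a) (r - q a)
    have h2 := hq a
    exact (by linarith : ‖r‖ ≤ ‖j r‖ + ε)
  · refine (Submodule.Quotient.eq S).2 ⟨a, ?_⟩
    simp [← map_sub]

/-- A factorisation of `f` through an injective linear map `u : R → K` from a space without norm
becomes a factorisation through an isometry, once `R` is given the norm induced by `u`. Keeping
`R` free of a norm beforehand allows quotients here, despite their own norm. -/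
theorem exists_norm_of_injective {K : Type*} [NormedAddCommGroup K] [NormedSpace ℂ K]
    {A : Type} [NormedAddCommGroup A] [NormedSpace ℂ A] [FiniteDimensional ℂ A]
    {R : Type} [AddCommGroup R] [Module ℂ R] [FiniteDimensional ℂ R]
    (u : R →ₗ[ℂ] K) (hu : Function.Injective u) (q : A →ₗ[ℂ] R) (f : A →L[ℂ] K)
    (hf : ∀ a, u (q a) = f a) :
    ∃ (R : Type) (_ : NormedAddCommGroup R) (_ : NormedSpace ℂ R) (_ : FiniteDimensional ℂ R)
      (u : R →L[ℂ] K) (q : A →L[ℂ] R), (∀ r, ‖u r‖ = ‖r‖) ∧ ∀ a, u (q a) = f a := by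
  letI : NormedAddCommGroup R := NormedAddCommGroup.induced R K u hu
  letI : NormedSpace ℂ R := NormedSpace.induced ℂ R K u
  exact ⟨R, inferInstance, inferInstance, inferInstance, LinearMap.toContinuousLinearMap u,
    LinearMap.toContinuousLinearMap q, fun _ => rfl, hf⟩

/-- Every Gurarii space is a Lindenstrauss space: a Banach space approximately saturated
w.r.t. isometries between finite-dimensional spaces is approximately injective w.r.t.
isometries between finite-dimensional spaces. -/
theorem approxInj_of_isGurarii (K : Type*) [NormedAddCommGroup K] [NormedSpace ℂ K]
    [CompleteSpace K] (hK : IsGurarii K) : ApproxInjFinDimIsometries K := by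
  intro A B _ _ _ _ _ _ h hh f hf ε hε
  have hfn : ∀ x, ‖f x‖ ≤ ‖x‖ := fun x => by simpa using f.le_of_opNorm_le hf x
  -- A finite-dimensional model in `Type` of the range of `f`, with the norm taken from `K`.
  obtain ⟨R, _, _, _, u, q, hu, huq⟩ : ∃ (R : Type) (_ : NormedAddCommGroup R)
      (_ : NormedSpace ℂ R) (_ : FiniteDimensional ℂ R) (u : R →L[ℂ] K) (q : A →L[ℂ] R),
      (∀ r, ‖u r‖ = ‖r‖) ∧ ∀ a, u (q a) = f a := by
    let N := LinearMap.ker f.toLinearMap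
    let u : (A ⧸ N) →ₗ[ℂ] K := N.liftQ f.toLinearMap le_rfl
    have hinj : Function.Injective u := LinearMap.ker_eq_bot.1 (Submodule.ker_liftQ_eq_bot' _ _ rfl)
    exact exists_norm_of_injective u hinj N.mkQ f fun a => rfl
  have hq : ∀ x, ‖q x‖ ≤ ‖x‖ := fun x => by rw [← hu, huq]; exact hfn x
  obtain ⟨P, _, _, _, i, j, hi, hj, hij⟩ := exists_isometric_amalgam h hh q hq
  obtain ⟨g, hg, hgu⟩ := hK R P j hj u hu ε hε
  refine ⟨g.comp i, ContinuousLinearMap.opNorm_le_bound _ zero_le_one fun b => ?_,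
    ContinuousLinearMap.opNorm_le_bound _ hε.le fun a => ?_⟩
  · simpa [hg] using hi b
  · have h1 := (g.comp j - u).le_of_opNorm_le hgu (q a)
    have h2 : ((g.comp i).comp h - f) a = (g.comp j - u) (q a) := by simp [hij, huq]
    rw [h2]
    exact h1.trans (mul_le_mul_of_nonneg_left (hq a) hε.le)
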